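/- arXiv:2012.02784 — 7 statements merged into one kernel-verified Lean document; each statement's English description precedes it below -/
import Mathlib

section
/- Let G and f be non-negative functions on [0, ∞) with f locally integrable, and suppose there are constants K > 0 and r > 0 such that G(t) ≤ K + ∫₀ᵗ f(s) G(s)^{r+1} ds for all t ≥ 0. Then for every t ≥ 0 satisfying K^{-r} − r ∫₀ᵗ f(s) ds > 0, one has G(t) ≤ (K^{-r} − r ∫₀ᵗ f(s) ds)^{-1/r}. -/
open MeasureTheory intervalIntegral

theorem gron_aux (a b r : ℝ) (ha : 0 < a) (hab : a ≤ b) (hr : 0 < r) :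
    a ^ (-r) - b ^ (-r) ≤ r * (b - a) / a ^ (r + 1) := by
  have hb : 0 < b := ha.trans_le hab
  have hx : 0 < b / a := by positivity
  have h1 : 1 - r * (b / a - 1) ≤ (b / a) ^ (-r) := by
    rw [Real.rpow_def_of_pos hx]
    have h2 := Real.add_one_le_exp (Real.log (b / a) * -r)
    have h3 := Real.log_le_sub_one_of_pos hx
    nlinarith
  have h4 : b ^ (-r) = a ^ (-r) * (b / a) ^ (-r) := by
    rw [← Real.mul_rpow ha.le hx.le, mul_div_cancel₀ _ ha.ne']
  have h5 : r * (b - a) / a ^ (r + 1) = a ^ (-r) * (r * (b / a - 1)) := by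
    rw [Real.rpow_add_one ha.ne', Real.rpow_neg ha.le]
    have : a ^ r ≠ 0 := (Real.rpow_pos_of_pos ha r).ne'
    field_simp
  rw [h4, h5]
  have := mul_le_mul_of_nonneg_left h1 (Real.rpow_pos_of_pos ha (-r)).le
  linarith

/-- Modified Gronwall inequality (Lemma 3.1). -/
theorem modified_gronwall
    (G f : ℝ → ℝ) (K r : ℝ) (hK : 0 < K) (hr : 0 < r)
    (hG : ∀ t, 0 ≤ t → 0 ≤ G t)
    (hf : ∀ t, 0 ≤ t → 0 ≤ f t)
    (hfint : ∀ t, 0 ≤ t → IntervalIntegrable f volume 0 t)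
    (hGmeas : Measurable G)
    (hint : ∀ t, 0 ≤ t →
      IntervalIntegrable (fun s => f s * G s ^ (r + 1)) volume 0 t)
    (hineq : ∀ t, 0 ≤ t → G t ≤ K + ∫ s in (0:ℝ)..t, f s * G s ^ (r + 1)) :
    ∀ t, 0 ≤ t → 0 < K ^ (-r) - r * ∫ s in (0:ℝ)..t, f s →
      G t ≤ (K ^ (-r) - r * ∫ s in (0:ℝ)..t, f s) ^ (-(1 / r)) := by
  intro T hT hD
  set g : ℝ → ℝ := fun s => f s * G s ^ (r + 1) with hg
  set H : ℝ → ℝ := fun t => K + ∫ s in (0:ℝ)..t, g s with hH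
  set F : ℝ → ℝ := fun t => ∫ s in (0:ℝ)..t, f s with hF
  have hgi : ∀ a b, 0 ≤ a → 0 ≤ b → IntervalIntegrable g volume a b :=
    fun a b ha hb => (hint a ha).symm.trans (hint b hb)
  have hfi : ∀ a b, 0 ≤ a → 0 ≤ b → IntervalIntegrable f volume a b :=
    fun a b ha hb => (hfint a ha).symm.trans (hfint b hb)
  have hg0 : ∀ s, 0 ≤ s → 0 ≤ g s := fun s hs =>
    mul_nonneg (hf s hs) (Real.rpow_nonneg (hG s hs) _)
  have hHsub : ∀ a b, 0 ≤ a → 0 ≤ b → H b - H a = ∫ s in a..b, g s := by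
    intro a b ha hb
    have := integral_interval_sub_left (hint b hb) (hint a ha)
    simp only [hH, hg] at this ⊢
    linarith
  have hFsub : ∀ a b, 0 ≤ a → 0 ≤ b → F b - F a = ∫ s in a..b, f s := by
    intro a b ha hb
    exact integral_interval_sub_left (hfint b hb) (hfint a ha)
  have hHmono : ∀ a b, 0 ≤ a → a ≤ b → H a ≤ H b := by
    intro a b ha hab
    have h1 := hHsub a b ha (ha.trans hab)
    have h2 : 0 ≤ ∫ s in a..b, g s :=
      integral_nonneg hab (fun s hs => hg0 s (ha.trans hs.1))
    linarith
  have hH0 : H 0 = K := by simp [hH]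
  have hF0 : F 0 = 0 := by simp [hF]
  have hHpos : ∀ a, 0 ≤ a → 0 < H a := fun a ha => by
    have := hHmono 0 a le_rfl ha
    linarith
  have hstep : ∀ a b, 0 ≤ a → a ≤ b → H b - H a ≤ H b ^ (r + 1) * (F b - F a) := by
    intro a b ha hab
    have hb := ha.trans hab
    rw [hHsub a b ha hb, hFsub a b ha hb, ← intervalIntegral.integral_const_mul]
    refine integral_mono_on hab (hgi a b ha hb) ((hfi a b ha hb).const_mul _) ?_
    intro s hs
    have hs0 := ha.trans hs.1
    have h1 : G s ≤ H b := (hineq s hs0).trans (hHmono s b hs0 hs.2)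
    have h2 := Real.rpow_le_rpow (hG s hs0) h1 (by linarith : (0:ℝ) ≤ r + 1)
    have := mul_le_mul_of_nonneg_left h2 (hf s hs0)
    simp only [hg]
    linarith
  have hHc : ContinuousOn H (Set.Icc 0 T) := by
    have := continuousOn_primitive_interval' (hint T hT) Set.left_mem_uIcc
    rw [Set.uIcc_of_le hT] at this
    exact continuousOn_const.add this
  have hFc : ContinuousOn F (Set.Icc 0 T) := by
    have := continuousOn_primitive_interval' (hfint T hT) Set.left_mem_uIcc
    rwa [Set.uIcc_of_le hT] at this
  have key : ∀ c : ℝ, 1 < c → K ^ (-r) ≤ H T ^ (-r) + r * c * F T := by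
    intro c hc
    have hpc : ContinuousOn (fun s => H s ^ (-r) + r * c * F s) (Set.Icc 0 T) :=
      (hHc.rpow_const (fun s hs => Or.inl (hHpos s hs.1).ne')).add (continuousOn_const.mul hFc)
    have hcl : IsClosed ({s | K ^ (-r) ≤ H s ^ (-r) + r * c * F s} ∩ Set.Icc 0 T) := by
      have := hpc.preimage_isClosed_of_isClosed isClosed_Icc (isClosed_Ici (a := K ^ (-r)))
      rw [Set.inter_comm]
      exact this
    refine hcl.Icc_subset_of_forall_exists_gt (by simp [hH0, hF0]) ?_ ⟨hT, le_rfl⟩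
    rintro x ⟨hxs, hx0, hxT⟩ y hy
    simp only [Set.mem_setOf_eq] at hxs
    have hxy : x < y := hy
    have hev : ∀ᶠ z in nhdsWithin x (Set.Ioi x), H z ^ (r + 1) < c * H x ^ (r + 1) := by
      have h1 : ContinuousWithinAt (fun s => H s ^ (r + 1)) (Set.Icc 0 T) x :=
        (hHc.rpow_const (fun s hs => Or.inl (hHpos s hs.1).ne')) x ⟨hx0, hxT.le⟩
      have h2 : ContinuousWithinAt (fun s => H s ^ (r + 1)) (Set.Ioc x T) x :=
        h1.mono (fun s hs => ⟨hx0.trans hs.1.le, hs.2⟩)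
      have hp := Real.rpow_pos_of_pos (hHpos x hx0) (r + 1)
      have h3 := h2.eventually_lt_const (show H x ^ (r + 1) < c * H x ^ (r + 1) by nlinarith)
      rwa [nhdsWithin_Ioc_eq_nhdsGT hxT] at h3
    obtain ⟨z, hz1, hz2⟩ := (hev.and (Ioc_mem_nhdsGT hxy)).exists
    refine ⟨z, ?_, hz2⟩
    have hxz := hz2.1.le
    have hHx := hHpos x hx0
    have hp := Real.rpow_pos_of_pos hHx (r + 1)
    have hFm : 0 ≤ F z - F x := by
      rw [hFsub x z hx0 (hx0.trans hxz)]
      exact integral_nonneg hxz (fun s hs => hf s (hx0.trans hs.1))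
    have e1 := gron_aux (H x) (H z) r hHx (hHmono x z hx0 hxz) hr
    have e2 : r * (H z - H x) / H x ^ (r + 1) ≤ r * c * (F z - F x) := by
      rw [div_le_iff₀ hp]
      have e3 := hstep x z hx0 hxz
      have e4 := mul_le_mul_of_nonneg_right hz1.le hFm
      have e5 := mul_le_mul_of_nonneg_left (e3.trans e4) hr.le
      linarith
    simp only [Set.mem_setOf_eq]
    linarith
  have key1 : K ^ (-r) ≤ H T ^ (-r) + r * 1 * F T := by
    have ht : Filter.Tendsto (fun c : ℝ => H T ^ (-r) + r * c * F T) (nhdsWithin 1 (Set.Ioi 1))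
        (nhds (H T ^ (-r) + r * 1 * F T)) := by
      refine Filter.Tendsto.mono_left ?_ nhdsWithin_le_nhds
      exact Continuous.tendsto (by fun_prop) 1
    refine ge_of_tendsto ht ?_
    filter_upwards [self_mem_nhdsWithin] with c hc using key c hc
  have hD' : K ^ (-r) - r * F T ≤ H T ^ (-r) := by linarith
  have hfin := Real.rpow_le_rpow_of_nonpos hD hD'
    (show -(1 / r) ≤ 0 by have : 0 < 1 / r := by positivity
                          linarith)
  rw [← Real.rpow_mul (hHpos T hT).le, show -r * -(1 / r) = 1 by field_simp, Real.rpow_one] at hfin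
  exact (hineq T hT).trans hfin
end

section
/- Let G and f be non-negative functions on [0, ∞) with f integrable on [0, ∞), and suppose there are constants K > 0 and r > 0 such that G(t) ≤ K + ∫₀ᵗ f(s) G(s)^{r+1} ds for all t ≥ 0 and such that r ∫₀^∞ f(s) ds < K^{-r}. Then G is uniformly bounded: G(t) ≤ (K^{-r} − r ∫₀^∞ f(s) ds)^{-1/r} for all t ≥ 0. -/
open MeasureTheory intervalIntegral

lemma rpow_neg_sub_le (a b r : ℝ) (ha : 0 < a) (hb : 0 < b) (hr : 0 < r) :
    a ^ (-r) - b ^ (-r) ≤ r * (a ^ (r + 1))⁻¹ * (b - a) := by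
  have hq : 0 < b / a := div_pos hb ha
  have h1 : 1 - r * (b / a - 1) ≤ (b / a) ^ (-r) := by
    rw [Real.rpow_def_of_pos hq]
    have h2 := Real.add_one_le_exp (Real.log (b / a) * -r)
    have h3 := mul_le_mul_of_nonneg_left (Real.log_le_sub_one_of_pos hq) hr.le
    linarith
  have h4 : b ^ (-r) = a ^ (-r) * (b / a) ^ (-r) := by
    rw [← Real.mul_rpow ha.le hq.le]
    congr 1
    field_simp
  have h5 : (a ^ (r + 1))⁻¹ = a ^ (-r) / a := by
    rw [Real.rpow_add ha, Real.rpow_one, Real.rpow_neg ha.le]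
    field_simp
  have h6 : 0 < a ^ (-r) := Real.rpow_pos_of_pos ha _
  have h7 : r * (a ^ (r + 1))⁻¹ * (b - a) = a ^ (-r) * (r * (b / a - 1)) := by
    rw [h5]; field_simp
  rw [h7, h4]
  nlinarith

lemma gronwall_aux (G f : ℝ → ℝ) (K r : ℝ) (hK : 0 < K) (hr : 0 < r)
    (hG : ∀ t, 0 ≤ t → 0 ≤ G t)
    (hf : ∀ t, 0 ≤ t → 0 ≤ f t)
    (hfint : ∀ t, 0 ≤ t → IntervalIntegrable f volume 0 t)
    (hint : ∀ t, 0 ≤ t →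
      IntervalIntegrable (fun s => f s * G s ^ (r + 1)) volume 0 t)
    (hineq : ∀ t, 0 ≤ t → G t ≤ K + ∫ s in (0:ℝ)..t, f s * G s ^ (r + 1))
    (T : ℝ) (hT : 0 ≤ T) (c : ℝ) (hc : 1 < c) :
    K ^ (-r) - (K + ∫ s in (0:ℝ)..T, f s * G s ^ (r + 1)) ^ (-r)
      ≤ c * (r * ∫ s in (0:ℝ)..T, f s) := by
  set H : ℝ → ℝ := fun t => K + ∫ s in (0:ℝ)..t, f s * G s ^ (r + 1) with hH
  set F : ℝ → ℝ := fun t => ∫ s in (0:ℝ)..t, f s with hF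
  have hnn : ∀ t, 0 ≤ t → 0 ≤ f t * G t ^ (r + 1) := fun t ht =>
    mul_nonneg (hf t ht) (Real.rpow_nonneg (hG t ht) _)
  have hsub : ∀ s t, 0 ≤ s → s ≤ t → H t - H s = ∫ u in s..t, f u * G u ^ (r + 1) := by
    intro s t hs hst
    have := integral_interval_sub_left (hint t (hs.trans hst)) (hint s hs)
    simp only [hH]
    linarith
  have hsubF : ∀ s t, 0 ≤ s → s ≤ t → F t - F s = ∫ u in s..t, f u := by
    intro s t hs hst
    exact integral_interval_sub_left (hfint t (hs.trans hst)) (hfint s hs)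
  have hmono : ∀ s t, 0 ≤ s → s ≤ t → H s ≤ H t := by
    intro s t hs hst
    have h1 := hsub s t hs hst
    have h2 : 0 ≤ ∫ u in s..t, f u * G u ^ (r + 1) :=
      integral_nonneg hst fun u hu => hnn u (hs.trans hu.1)
    linarith
  have hmonoF : ∀ s t, 0 ≤ s → s ≤ t → F s ≤ F t := by
    intro s t hs hst
    have h1 := hsubF s t hs hst
    have h2 : 0 ≤ ∫ u in s..t, f u :=
      integral_nonneg hst fun u hu => hf u (hs.trans hu.1)
    linarith
  have hH0 : H 0 = K := by simp [hH]
  have hF0 : F 0 = 0 := by simp [hF]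
  have hpos : ∀ t, 0 ≤ t → 0 < H t := fun t ht => by
    have := hmono 0 t le_rfl ht
    linarith
  have hstep : ∀ s t, 0 ≤ s → s ≤ t → H t - H s ≤ H t ^ (r + 1) * (F t - F s) := by
    intro s t hs hst
    have ht := hs.trans hst
    rw [hsub s t hs hst, hsubF s t hs hst, ← intervalIntegral.integral_const_mul]
    refine integral_mono_on hst ((hint s hs).symm.trans (hint t ht))
      (((hfint s hs).symm.trans (hfint t ht)).const_mul _) ?_
    intro u hu
    have hu0 := hs.trans hu.1
    rw [mul_comm]
    refine mul_le_mul_of_nonneg_right ?_ (hf u hu0)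
    exact Real.rpow_le_rpow (hG u hu0) ((hineq u hu0).trans (hmono u t hu0 hu.2)) (by linarith)
  have hHc : ContinuousOn H (Set.Icc 0 T) := by
    have := continuousOn_primitive_interval' (hint T hT) Set.left_mem_uIcc
    rw [Set.uIcc_of_le hT] at this
    exact continuousOn_const.add this
  have hFc : ContinuousOn F (Set.Icc 0 T) := by
    have := continuousOn_primitive_interval' (hfint T hT) Set.left_mem_uIcc
    rwa [Set.uIcc_of_le hT] at this
  set S : Set ℝ := {t | K ^ (-r) - H t ^ (-r) ≤ c * (r * F t)} with hS
  have hclosed : IsClosed (S ∩ Set.Icc 0 T) := by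
    have h1 : ContinuousOn (fun t => K ^ (-r) - H t ^ (-r)) (Set.Icc 0 T) :=
      continuousOn_const.sub
        (hHc.rpow_const fun x hx => Or.inl (hpos x hx.1).ne')
    have h2 : ContinuousOn (fun t => c * (r * F t)) (Set.Icc 0 T) :=
      continuousOn_const.mul (continuousOn_const.mul hFc)
    have := isClosed_Icc.isClosed_le h1 h2
    convert this using 1
    ext x
    simp [hS, and_comm]
  have h0 : (0:ℝ) ∈ S := by simp [hS, hH0, hF0]
  have key : Set.Icc 0 T ⊆ S := by
    refine hclosed.Icc_subset_of_forall_exists_gt h0 ?_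
    rintro x ⟨hxS, hx0, hxT⟩ y hy
    have hxp : 0 < H x ^ (r + 1) := Real.rpow_pos_of_pos (hpos x hx0) _
    have hcont : ContinuousOn (fun t => H t ^ (r + 1)) (Set.Icc 0 T) :=
      hHc.rpow_const fun x hx => Or.inl (hpos x hx.1).ne'
    have hev := (hcont x ⟨hx0, hxT.le⟩).eventually_lt_const
      (show H x ^ (r + 1) < c * H x ^ (r + 1) by nlinarith)
    have hle : nhdsWithin x (Set.Ioc x (min y T)) ≤ nhdsWithin x (Set.Icc 0 T) :=
      nhdsWithin_mono _ fun u hu => ⟨hx0.trans hu.1.le, hu.2.trans (min_le_right _ _)⟩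
    have hm : x < min y T := lt_min hy hxT
    have : (nhdsWithin x (Set.Ioc x (min y T))).NeBot := by
      rw [nhdsWithin_Ioc_eq_nhdsGT hm]; infer_instance
    obtain ⟨t, ht1, ht2⟩ := ((hev.filter_mono hle).and self_mem_nhdsWithin).exists
    refine ⟨t, ?_, ht2.1, ht2.2.trans (min_le_left _ _)⟩
    have hxt := ht2.1.le
    have e1 := rpow_neg_sub_le (H x) (H t) r (hpos x hx0) (hpos t (hx0.trans hxt)) hr
    have e2 := hstep x t hx0 hxt
    have e3 := hmonoF x t hx0 hxt
    have e4 : H t - H x ≤ c * H x ^ (r + 1) * (F t - F x) :=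
      e2.trans (mul_le_mul_of_nonneg_right (le_of_lt ht1) (by linarith))
    have e5 : r * (H x ^ (r + 1))⁻¹ * (H t - H x)
        ≤ r * (H x ^ (r + 1))⁻¹ * (c * H x ^ (r + 1) * (F t - F x)) :=
      mul_le_mul_of_nonneg_left e4 (by positivity)
    have e6 : r * (H x ^ (r + 1))⁻¹ * (c * H x ^ (r + 1) * (F t - F x))
        = c * (r * F t) - c * (r * F x) := by
      field_simp
    have e7 : K ^ (-r) - H x ^ (-r) ≤ c * (r * F x) := hxS
    show K ^ (-r) - H t ^ (-r) ≤ c * (r * F t)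
    linarith
  exact key ⟨hT, le_rfl⟩

/-- Smallness-implies-global-boundedness consequence of the modified Gronwall
inequality. -/
theorem modified_gronwall_global_bound
    (G f : ℝ → ℝ) (K r : ℝ) (hK : 0 < K) (hr : 0 < r)
    (hG : ∀ t, 0 ≤ t → 0 ≤ G t)
    (hf : ∀ t, 0 ≤ t → 0 ≤ f t)
    (hGmeas : Measurable G) (hfmeas : Measurable f)
    (hfint : IntegrableOn f (Set.Ici 0) volume)
    (hint : ∀ t, 0 ≤ t →
      IntervalIntegrable (fun s => f s * G s ^ (r + 1)) volume 0 t)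
    (hineq : ∀ t, 0 ≤ t → G t ≤ K + ∫ s in (0:ℝ)..t, f s * G s ^ (r + 1))
    (hsmall : r * ∫ s in Set.Ici (0:ℝ), f s < K ^ (-r)) :
    ∀ t, 0 ≤ t →
      G t ≤ (K ^ (-r) - r * ∫ s in Set.Ici (0:ℝ), f s) ^ (-(1 / r)) := by
  intro t ht
  have hfi : ∀ t, 0 ≤ t → IntervalIntegrable f volume 0 t := fun t ht => by
    rw [intervalIntegrable_iff_integrableOn_Icc_of_le ht]
    exact hfint.mono_set Set.Icc_subset_Ici_self
  have haux := gronwall_aux G f K r hK hr hG hf hfi hint hineq t ht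
  set Ht := K + ∫ s in (0:ℝ)..t, f s * G s ^ (r + 1) with hHt
  have hHpos : 0 < Ht := by
    have : 0 ≤ ∫ s in (0:ℝ)..t, f s * G s ^ (r + 1) :=
      integral_nonneg ht fun u hu =>
        mul_nonneg (hf u hu.1) (Real.rpow_nonneg (hG u hu.1) _)
    linarith
  have hlim : K ^ (-r) - Ht ^ (-r) ≤ r * ∫ s in (0:ℝ)..t, f s := by
    have htend : Filter.Tendsto (fun c : ℝ => c * (r * ∫ s in (0:ℝ)..t, f s))
        (nhdsWithin 1 (Set.Ioi 1)) (nhds (1 * (r * ∫ s in (0:ℝ)..t, f s))) :=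
      ((continuous_id.mul continuous_const).tendsto 1).mono_left nhdsWithin_le_nhds
    rw [one_mul] at htend
    exact ge_of_tendsto htend (Filter.eventually_of_mem self_mem_nhdsWithin haux)
  have hle : ∫ s in (0:ℝ)..t, f s ≤ ∫ s in Set.Ici (0:ℝ), f s := by
    rw [integral_of_le ht]
    refine setIntegral_mono_set hfint ?_ ?_
    · exact (ae_restrict_iff' measurableSet_Ici).2 (Filter.Eventually.of_forall hf)
    · exact Filter.Eventually.of_forall fun u hu => le_of_lt hu.1
  have hB : K ^ (-r) - r * ∫ s in Set.Ici (0:ℝ), f s ≤ Ht ^ (-r) := by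
    have := mul_le_mul_of_nonneg_left hle hr.le
    linarith
  have hfin := Real.rpow_le_rpow_of_nonpos (sub_pos.2 hsmall) hB
    (show -(1 / r) ≤ 0 by have := div_pos one_pos hr; linarith)
  rw [← Real.rpow_mul hHpos.le, show -r * -(1 / r) = 1 by field_simp, Real.rpow_one] at hfin
  exact (hineq t ht).trans hfin
end

section
/- Let E : [0, ∞) → [0, ∞) be a non-increasing function and assume there is a constant ω > 0 such that ∫ₜ^∞ E(s) ds ≤ ω E(t) for all t ≥ 0. Then E(t) ≤ E(0) e^{1 − t/ω} for all t ≥ 0. -/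
open MeasureTheory

/-- Exponential-decay case (μ = 0) of the Haraux–Komornik–Martinez integral
inequality (Lemma 4.1). -/
theorem haraux_komornik_exponential
    (E : ℝ → ℝ) (ω : ℝ) (hω : 0 < ω)
    (hE : ∀ t, 0 ≤ t → 0 ≤ E t)
    (hmono : AntitoneOn E (Set.Ici 0))
    (hint : ∀ t, 0 ≤ t → IntegrableOn E (Set.Ici t) volume)
    (hineq : ∀ t, 0 ≤ t → ∫ s in Set.Ici t, E s ≤ ω * E t) :
    ∀ t, 0 ≤ t → E t ≤ E 0 * Real.exp (1 - t / ω) := by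
  obtain ⟨F, hF⟩ : ∃ F : ℝ → ℝ, ∀ t, F t = ∫ s in Set.Ici t, E s := ⟨_, fun _ => rfl⟩
  have hF0 : ∀ t, 0 ≤ t → 0 ≤ F t := by
    intro t ht
    rw [hF]
    exact setIntegral_nonneg measurableSet_Ici fun s hs => hE s (ht.trans hs)
  have hFE : ∀ t, 0 ≤ t → F t ≤ ω * E t := by
    intro t ht
    rw [hF]
    exact hineq t ht
  have key : ∀ a b, 0 ≤ a → a ≤ b → (b - a) * E b + F b ≤ F a := by
    intro a b ha hab
    have hI : IntegrableOn E (Set.Ico a b) := (hint a ha).mono_set Set.Ico_subset_Ici_self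
    have hd : Disjoint (Set.Ico a b) (Set.Ici b) := by
      rw [Set.disjoint_left]
      intro x hx hx'
      exact absurd hx.2 (not_lt.mpr hx')
    have hsplit : F a = (∫ s in Set.Ico a b, E s) + F b := by
      rw [hF, hF, ← Set.Ico_union_Ici_eq_Ici hab,
        setIntegral_union hd measurableSet_Ici hI (hint b (ha.trans hab))]
    have hlow : (b - a) * E b ≤ ∫ s in Set.Ico a b, E s := by
      have h1 : ∫ _ in Set.Ico a b, E b = (b - a) * E b := by
        rw [setIntegral_const, Real.volume_real_Ico_of_le hab, smul_eq_mul]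
      rw [← h1]
      refine setIntegral_mono_on ?_ hI measurableSet_Ico ?_
      · exact integrableOn_const (by simp)
      · intro x hx
        exact hmono (ha.trans hx.1) (ha.trans hab) hx.2.le
    linarith
  have step : ∀ a h, 0 ≤ a → 0 ≤ h → F (a + h) * (1 + h / ω) ≤ F a := by
    intro a h ha hh
    have h1 := key a (a + h) ha (by linarith)
    have h2 := hFE (a + h) (by linarith)
    have h3 : F (a + h) / ω ≤ E (a + h) := by
      rw [div_le_iff₀ hω]; linarith
    have h4 := mul_le_mul_of_nonneg_left h3 hh
    have h5 : F (a + h) * (1 + h / ω) = F (a + h) + h * (F (a + h) / ω) := by ring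
    rw [h5]
    have h6 : a + h - a = h := by ring
    rw [h6] at h1
    linarith
  have iter : ∀ h, 0 ≤ h → ∀ k : ℕ, F (k * h) * (1 + h / ω) ^ k ≤ F 0 := by
    intro h hh k
    induction k with
    | zero => simp
    | succ k ih =>
      have h1 := step (k * h) h (by positivity) hh
      have h2 : ((k + 1 : ℕ) : ℝ) * h = k * h + h := by push_cast; ring
      rw [h2, pow_succ']
      have h3 : 0 ≤ (1 + h / ω) ^ k := by positivity
      have h4 := mul_le_mul_of_nonneg_right h1 h3
      rw [← mul_assoc]
      exact h4.trans ih
  have decay : ∀ t, 0 ≤ t → F t * Real.exp (t / ω) ≤ F 0 := by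
    intro t ht
    refine le_of_tendsto ((Real.tendsto_one_add_div_pow_exp (t / ω)).const_mul (F t)) ?_
    filter_upwards [Filter.eventually_gt_atTop 0] with n hn
    have hn' : (n : ℝ) ≠ 0 := by positivity
    have h1 := iter (t / n) (by positivity) n
    rw [mul_div_cancel₀ t hn', div_right_comm] at h1
    exact h1
  intro t ht
  have hE0 := hE 0 le_rfl
  rcases le_total t ω with h | h
  · have h1 : E t ≤ E 0 := hmono (Set.mem_Ici.mpr le_rfl) ht ht
    have h2 : 1 ≤ Real.exp (1 - t / ω) := by
      apply Real.one_le_exp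
      rw [sub_nonneg, div_le_one hω]
      exact h
    nlinarith
  · have h0 : 0 ≤ t - ω := by linarith
    have h1 := key (t - ω) t h0 (by linarith)
    have h2 := decay (t - ω) h0
    have h3 := hFE 0 le_rfl
    have h4 := hF0 t ht
    have h5 : (t - ω) / ω = -(1 - t / ω) := by field_simp; ring
    rw [h5, Real.exp_neg, ← div_eq_mul_inv, div_le_iff₀ (Real.exp_pos _)] at h2
    have h6 := mul_le_mul_of_nonneg_right h3 (Real.exp_pos (1 - t / ω)).le
    have h7 : ω * E t ≤ ω * (E 0 * Real.exp (1 - t / ω)) := by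
      have h8 : t - (t - ω) = ω := by ring
      rw [h8] at h1
      linarith
    exact le_of_mul_le_mul_left h7 hω
end

section
/- Let E : [0, ∞) → [0, ∞) be a non-increasing function and assume there are constants μ > 0 and ω > 0 such that ∫ₜ^∞ E(s)^{μ+1} ds ≤ ω E(0)^{μ} E(t) for all t ≥ 0. Then for every t ≥ 0, E(t) ≤ E(0) ((1 + μ) ω / (ω + μ t))^{1/μ}. -/
open MeasureTheory

theorem hk_bern (μ u : ℝ) (hμ : 0 < μ) (hu : 0 < u) : 1 + μ * (1 - u) ≤ u ^ (-μ) := by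
  rw [Real.rpow_def_of_pos hu]
  have h1 := Real.add_one_le_exp (Real.log u * -μ)
  have h2 := Real.log_le_sub_one_of_pos hu
  nlinarith

/-- differential inequality in integrated form -/
theorem hk_ode (F : ℝ → ℝ) (μ K T : ℝ) (hμ : 0 < μ) (hK : 0 < K) (hT : 0 ≤ T)
    (hc : ContinuousOn F (Set.Icc 0 T)) (hpos : ∀ x ∈ Set.Icc 0 T, 0 < F x)
    (hF : ∀ x z, 0 ≤ x → x < z → z ≤ T → (z - x) * (F z / K) ^ (μ + 1) ≤ F x - F z) :
    F 0 ^ (-μ) + μ * K ^ (-(μ + 1)) * T ≤ F T ^ (-μ) := by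
  set c := μ * K ^ (-(μ + 1)) with hcdef
  have key := image_le_of_liminf_slope_right_le_deriv_boundary
    (f := fun x => -(F x ^ (-μ))) (a := 0) (b := T)
    (B := fun x => -(F 0 ^ (-μ)) - c * x) (B' := fun _ => -c)
    ((hc.rpow_const (fun x hx => Or.inl (hpos x hx).ne')).neg) (by simp)
    (by fun_prop)
    (fun x _ => by
      have h : HasDerivAt (fun x : ℝ => -(F 0 ^ (-μ)) - c * x) (-c) x := by
        simpa using ((hasDerivAt_id x).const_mul c).const_sub (-(F 0 ^ (-μ)))
      exact h.hasDerivWithinAt)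
    (fun x hx r hr => by
      have hFx := hpos x ⟨hx.1, hx.2.le⟩
      have hIoc : Set.Ioc x T ∈ nhdsWithin x (Set.Ioi x) := Ioc_mem_nhdsGT hx.2
      have hcx : Filter.Tendsto F (nhdsWithin x (Set.Ioi x)) (nhds (F x)) := by
        have h := hc x ⟨hx.1, hx.2.le⟩
        refine h.mono_left (nhdsWithin_le_of_mem ?_)
        exact Filter.mem_of_superset hIoc (fun z hz => ⟨hx.1.trans hz.1.le, hz.2⟩)
      have hlim : Filter.Tendsto (fun z => -(μ * F x ^ (-μ - 1) * (F z / K) ^ (μ + 1)))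
          (nhdsWithin x (Set.Ioi x)) (nhds (-c)) := by
        have h1 : Filter.Tendsto (fun z => -(μ * F x ^ (-μ - 1) * (F z / K) ^ (μ + 1)))
          (nhdsWithin x (Set.Ioi x)) (nhds (-(μ * F x ^ (-μ - 1) * (F x / K) ^ (μ + 1)))) :=
          (((hcx.div_const K).rpow_const (Or.inr (by positivity))).const_mul _).neg
        have h2 : μ * F x ^ (-μ - 1) * (F x / K) ^ (μ + 1) = c := by
          rw [Real.div_rpow hFx.le hK.le, hcdef, Real.rpow_neg hK.le,
            show -μ - 1 = -(μ + 1) by ring, Real.rpow_neg hFx.le]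
          have := Real.rpow_pos_of_pos hFx (μ + 1)
          have := Real.rpow_pos_of_pos hK (μ + 1)
          field_simp
        rwa [h2] at h1
      have hev := hlim.eventually (gt_mem_nhds hr)
      refine Filter.Eventually.frequently ?_
      filter_upwards [hev, hIoc] with z hz hzI
      refine lt_of_le_of_lt ?_ hz
      have hzx : 0 < z - x := sub_pos.2 hzI.1
      have hFz := hpos z ⟨hx.1.trans hzI.1.le, hzI.2⟩
      rw [slope_def_field, div_le_iff₀ hzx]
      have hb := hk_bern μ (F z / F x) hμ (by positivity)
      rw [Real.div_rpow hFz.le hFx.le, le_div_iff₀ (by positivity)] at hb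
      have hd := hF x z hx.1 hzI.1 hzI.2
      have hs : F x ^ (-μ) = F x ^ (-μ - 1) * F x := by
        rw [← Real.rpow_add_one hFx.ne']; congr 1; ring
      have hq : 0 < F x ^ (-μ - 1) := by positivity
      have he : (1 + μ * (1 - F z / F x)) * F x ^ (-μ)
          = F x ^ (-μ) + μ * F x ^ (-μ - 1) * (F x - F z) := by
        rw [hs]; field_simp
      rw [he] at hb
      have := mul_le_mul_of_nonneg_left hd (mul_pos hμ hq).le
      linarith)
  have := key (show T ∈ Set.Icc 0 T from ⟨hT, le_rfl⟩)
  linarith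

/-- Polynomial-decay case (μ > 0) of the Haraux–Komornik–Martinez integral
inequality (Lemma 4.1). -/
theorem haraux_komornik_polynomial
    (E : ℝ → ℝ) (μ ω : ℝ) (hμ : 0 < μ) (hω : 0 < ω)
    (hE : ∀ t, 0 ≤ t → 0 ≤ E t)
    (hmono : AntitoneOn E (Set.Ici 0))
    (hint : ∀ t, 0 ≤ t →
      IntegrableOn (fun s => E s ^ (μ + 1)) (Set.Ici t) volume)
    (hineq : ∀ t, 0 ≤ t →
      ∫ s in Set.Ici t, E s ^ (μ + 1) ≤ ω * E 0 ^ μ * E t) :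
    ∀ t, 0 ≤ t →
      E t ≤ E 0 * ((1 + μ) * ω / (ω + μ * t)) ^ (1 / μ) := by
  intro t ht
  have hE0 := hE 0 le_rfl
  have hden : 0 < ω + μ * t := by positivity
  have hEt0 : E t ≤ E 0 := hmono (Set.mem_Ici.2 le_rfl) ht ht
  rcases lt_or_ge t ω with htω | htω
  · have h1 : 1 ≤ ((1 + μ) * ω / (ω + μ * t)) ^ (1 / μ) := by
      apply Real.one_le_rpow _ (by positivity)
      rw [le_div_iff₀ hden]
      nlinarith
    nlinarith
  rcases (hE t ht).eq_or_lt with he | he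
  · rw [← he]; positivity
  have hE0p : 0 < E 0 := he.trans_le hEt0
  set K := ω * E 0 ^ μ with hKdef
  have hK : 0 < K := by positivity
  set F : ℝ → ℝ := fun x => ∫ s in Set.Ici x, E s ^ (μ + 1) with hFdef
  have hii : ∀ x z, 0 ≤ x → x ≤ z →
      IntervalIntegrable (fun s => E s ^ (μ + 1)) volume x z := by
    intro x z hx hxz
    rw [intervalIntegrable_iff_integrableOn_Icc_of_le hxz]
    exact (hint x hx).mono_set Set.Icc_subset_Ici_self
  have hdiff : ∀ x z, 0 ≤ x → x ≤ z → F x - F z = ∫ s in x..z, E s ^ (μ + 1) := by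
    intro x z hx hxz
    simp only [hFdef, integral_Ici_eq_integral_Ioi]
    have h1 := (hint x hx).mono_set Set.Ioi_subset_Ici_self
    have h2 := (hint z (hx.trans hxz)).mono_set Set.Ioi_subset_Ici_self
    rw [intervalIntegral.integral_Ioi_sub_Ioi h1 hxz]
  have hlow : ∀ x z, 0 ≤ x → x ≤ z → (z - x) * E z ^ (μ + 1) ≤ F x - F z := by
    intro x z hx hxz
    rw [hdiff x z hx hxz]
    have := intervalIntegral.integral_mono_on (f := fun _ => E z ^ (μ + 1)) hxz
      (by simp) (hii x z hx hxz) (fun s hs => by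
        apply Real.rpow_le_rpow (hE z (hx.trans hxz)) _ (by positivity)
        exact hmono (hx.trans hs.1) (hx.trans hxz) hs.2)
    simpa using this
  have hF0 : ∀ x, 0 ≤ x → 0 ≤ F x := by
    intro x hx
    exact setIntegral_nonneg measurableSet_Ici
      (fun s hs => Real.rpow_nonneg (hE s (hx.trans hs)) _)
  -- the intermediate time
  set s := (t - ω) / (μ + 1) with hs
  have hs0 : 0 ≤ s := div_nonneg (by linarith) (by positivity)
  have hts : t = ω + (μ + 1) * s := by rw [hs]; field_simp; ring
  set D := ω + μ * s with hD
  have hDp : 0 < D := by positivity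
  have hDt : t - s = D := by rw [hD]; linarith
  have hst : s ≤ t := by linarith
  have hFs : D * E t ^ (μ + 1) ≤ F s := by
    have := hlow s t hs0 hst
    rw [hDt] at this
    linarith [hF0 t ht]
  have hle : 0 < D * E t ^ (μ + 1) := by positivity
  have hanti : ∀ x z, 0 ≤ x → x ≤ z → F z ≤ F x := by
    intro x z hx hxz
    have := hlow x z hx hxz
    have h2 : 0 ≤ (z - x) * E z ^ (μ + 1) :=
      mul_nonneg (by linarith) (Real.rpow_nonneg (hE z (hx.trans hxz)) _)
    linarith
  have hpos : ∀ x ∈ Set.Icc 0 s, 0 < F x := fun x hx =>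
    (hle.trans_le hFs).trans_le (hanti x s hx.1 hx.2)
  have hcont : ContinuousOn F (Set.Icc 0 s) := by
    have h1 : ContinuousOn (fun x => F 0 - ∫ r in (0:ℝ)..x, E r ^ (μ + 1)) (Set.Icc 0 s) := by
      apply continuousOn_const.sub
      have := intervalIntegral.continuousOn_primitive_interval (μ := volume) (a := 0) (b := s)
        (f := fun r => E r ^ (μ + 1)) (by
          rw [Set.uIcc_of_le hs0]
          exact (hint 0 le_rfl).mono_set Set.Icc_subset_Ici_self)
      rwa [Set.uIcc_of_le hs0] at this
    refine h1.congr (fun x hx => ?_)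
    have := hdiff 0 x le_rfl hx.1
    simp only
    linarith
  have hode := hk_ode F μ K s hμ hK hs0 hcont hpos (by
    intro x z hx hxz hz
    have hz0 : 0 ≤ z := hx.trans hxz.le
    refine le_trans ?_ (hlow x z hx hxz.le)
    apply mul_le_mul_of_nonneg_left _ (by linarith)
    apply Real.rpow_le_rpow (div_nonneg (hF0 z hz0) hK.le) _ (by positivity)
    rw [div_le_iff₀ hK, mul_comm]
    exact hineq z hz0)
  have hF0K : (K * E 0) ^ (-μ) ≤ F 0 ^ (-μ) :=
    Real.rpow_le_rpow_of_nonpos (hpos 0 ⟨le_rfl, hs0⟩) (hineq 0 le_rfl) (by linarith)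
  have hFsK : F s ^ (-μ) ≤ (D * E t ^ (μ + 1)) ^ (-μ) :=
    Real.rpow_le_rpow_of_nonpos hle hFs (by linarith)
  have hA : (K * E 0) ^ (-μ) = K ^ (-(μ + 1)) * ω := by
    have h1 : ω = K * E 0 ^ (-μ) := by
      rw [hKdef, Real.rpow_neg hE0]
      field_simp
    rw [Real.mul_rpow hK.le hE0, show -μ = -(μ + 1) + 1 by ring, Real.rpow_add_one hK.ne',
      show -(μ + 1) + 1 = -μ by ring, mul_assoc, ← h1]
  have hB : K ^ (-(μ + 1)) * D ≤ (D * E t ^ (μ + 1)) ^ (-μ) := by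
    have : K ^ (-(μ + 1)) * D = K ^ (-(μ + 1)) * ω + μ * K ^ (-(μ + 1)) * s := by
      rw [hD]; ring
    linarith
  have hC : (D * E t ^ (μ + 1)) ^ (-μ) = D * (D * E t ^ μ) ^ (-(μ + 1)) := by
    rw [Real.mul_rpow hDp.le (by positivity), Real.mul_rpow hDp.le (by positivity),
      ← Real.rpow_mul he.le, ← Real.rpow_mul he.le, ← mul_assoc, mul_comm D (D ^ _),
      ← Real.rpow_add_one hDp.ne']
    congr 2 <;> ring
  rw [hC, mul_comm D] at hB
  have hB2 := le_of_mul_le_mul_right hB hDp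
  have hDe : D * E t ^ μ ≤ K :=
    (Real.rpow_le_rpow_iff_of_neg hK (by positivity) (by linarith)).1 hB2
  have hfin : E t ^ μ ≤ E 0 ^ μ * ((1 + μ) * ω / (ω + μ * t)) := by
    have h1 : (1 + μ) * D = ω + μ * t := by rw [hts, hD]; ring
    rw [← h1, mul_div_mul_left _ _ (by positivity), ← mul_div_assoc, le_div_iff₀ hDp]
    linarith
  have := Real.rpow_le_rpow (by positivity) hfin (z := 1 / μ) (by positivity)
  rwa [Real.mul_rpow (by positivity) (by positivity), ← Real.rpow_mul he.le,
    ← Real.rpow_mul hE0, mul_one_div_cancel hμ.ne', Real.rpow_one, Real.rpow_one] at this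
end

section
/- Consider the Galerkin system: let n ∈ ℕ, let λ₁, …, λₙ be positive reals, let m₀, m₁ > 0, and let α, β be nonzero reals. Let h = (h₁, …, hₙ) : [0, ∞) → ℝⁿ be twice differentiable and c = (c₁, …, cₙ) : [0, ∞) → ℝⁿ be differentiable, satisfying for each k and all t ≥ 0: hₖ''(t) + (m₀ + m₁ Σⱼ λⱼ hⱼ(t)²) λₖ hₖ(t) = α λₖ cₖ(t) and cₖ'(t) + λₖ cₖ(t) + β λₖ hₖ'(t) = 0. Define the energy Eⁿ(t) = (1/2) Σₖ hₖ'(t)² + (m₀/2) Σₖ λₖ hₖ(t)² + (m₁/4) (Σₖ λₖ hₖ(t)²)² + (α/(2β)) Σₖ cₖ(t)². Then for all t ≥ 0, (Eⁿ)'(t) = −(α/β) Σₖ λₖ cₖ(t)²; in particular, if α and β have the same sign then Eⁿ is non-increasing. -/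
open Finset

/-- Energy identity for the Faedo–Galerkin approximation of the coupled
non-degenerate Kirchhoff–heat system (finite-dimensional form of Lemma 2.1). -/
theorem galerkin_energy_identity
    (n : ℕ) (lam : Fin n → ℝ) (hlam : ∀ k, 0 < lam k)
    (m₀ m₁ α β : ℝ) (hm₀ : 0 < m₀) (hm₁ : 0 < m₁) (hα : α ≠ 0) (hβ : β ≠ 0)
    (h c : Fin n → ℝ → ℝ)
    (hdiff : ∀ k, Differentiable ℝ (h k))
    (hdiff' : ∀ k, Differentiable ℝ (deriv (h k)))
    (cdiff : ∀ k, Differentiable ℝ (c k))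
    (heq : ∀ k, ∀ t, 0 ≤ t →
      deriv (deriv (h k)) t
        + (m₀ + m₁ * ∑ j, lam j * (h j t) ^ 2) * lam k * h k t
        = α * lam k * c k t)
    (ceq : ∀ k, ∀ t, 0 ≤ t →
      deriv (c k) t + lam k * c k t + β * lam k * deriv (h k) t = 0)
    (E : ℝ → ℝ)
    (hE : E = fun t =>
      (1 / 2) * ∑ k, (deriv (h k) t) ^ 2
        + (m₀ / 2) * ∑ k, lam k * (h k t) ^ 2
        + (m₁ / 4) * (∑ k, lam k * (h k t) ^ 2) ^ 2
        + (α / (2 * β)) * ∑ k, (c k t) ^ 2) :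
    (∀ t, 0 ≤ t →
        HasDerivAt E (-(α / β) * ∑ k, lam k * (c k t) ^ 2) t)
      ∧ (0 < α / β → AntitoneOn E (Set.Ici 0)) := by
  have key : ∀ t, 0 ≤ t →
      HasDerivAt E (-(α / β) * ∑ k, lam k * (c k t) ^ 2) t := by
    intro t ht
    have h1 : HasDerivAt (fun t => ∑ k, (deriv (h k) t) ^ 2)
        (∑ k, 2 * deriv (h k) t * deriv (deriv (h k)) t) t := by
      refine HasDerivAt.fun_sum fun k _ => ?_
      simpa using ((hdiff' k t).hasDerivAt).fun_pow 2
    have h2 : HasDerivAt (fun t => ∑ k, lam k * (h k t) ^ 2)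
        (∑ k, lam k * (2 * h k t * deriv (h k) t)) t := by
      refine HasDerivAt.fun_sum fun k _ => ?_
      simpa using (((hdiff k t).hasDerivAt).fun_pow 2).const_mul (lam k)
    have h3 : HasDerivAt (fun t => ∑ k, (c k t) ^ 2)
        (∑ k, 2 * c k t * deriv (c k) t) t := by
      refine HasDerivAt.fun_sum fun k _ => ?_
      simpa using ((cdiff k t).hasDerivAt).fun_pow 2
    rw [hE]
    have h4 := (((h1.const_mul (1 / 2)).fun_add (h2.const_mul (m₀ / 2))).fun_add
      ((h2.fun_pow 2).const_mul (m₁ / 4))).fun_add (h3.const_mul (α / (2 * β)))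
    refine h4.congr_deriv ?_
    have e1 := fun k => heq k t ht
    generalize (∑ k, lam k * (h k t) ^ 2) = S at e1 ⊢
    have e4 : ((2 : ℕ) : ℝ) * S ^ (2 - 1) = 2 * S := by norm_num
    rw [e4, ← mul_assoc (m₁ / 4)]
    simp only [Finset.mul_sum, ← Finset.sum_add_distrib]
    refine Finset.sum_congr rfl fun k _ => ?_
    have a1 : deriv (deriv (h k)) t = α * lam k * c k t - (m₀ + m₁ * S) * lam k * h k t := by
      linarith [e1 k]
    have a2 : deriv (c k) t = - lam k * c k t - β * lam k * deriv (h k) t := by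
      linarith [ceq k t ht]
    rw [a1, a2]
    field_simp
    ring
  refine ⟨key, fun hab => ?_⟩
  refine antitoneOn_of_deriv_nonpos (convex_Ici 0)
    (fun t ht => (key t ht).continuousAt.continuousWithinAt) ?_ ?_
  · intro t ht
    exact (key t (interior_subset ht)).differentiableAt.differentiableWithinAt
  · intro t ht
    rw [(key t (interior_subset ht)).deriv]
    have : 0 ≤ ∑ k, lam k * (c k t) ^ 2 :=
      Finset.sum_nonneg fun k _ => mul_nonneg (hlam k).le (sq_nonneg _)
    have := mul_nonneg hab.le this
    linarith
end

section
/- Consider the Galerkin system: let n ∈ ℕ, let λ₁, …, λₙ be positive reals, let m₀, m₁ > 0, and let α, β be nonzero reals with α/β > 0. Let h : [0, ∞) → ℝⁿ be twice differentiable and c : [0, ∞) → ℝⁿ be differentiable, satisfying for each k and all t ≥ 0: hₖ''(t) + (m₀ + m₁ Σⱼ λⱼ hⱼ(t)²) λₖ hₖ(t) = α λₖ cₖ(t) and cₖ'(t) + λₖ cₖ(t) + β λₖ hₖ'(t) = 0. Then for all t ≥ 0: Σₖ hₖ'(t)² + (m₀ + (m₁/2) Σₖ λₖ hₖ(t)²)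 Σₖ λₖ hₖ(t)² + (α/β) Σₖ cₖ(t)² + (2α/β) ∫₀ᵗ Σₖ λₖ cₖ(s)² ds ≤ Σₖ hₖ'(0)² + (m₀ + (m₁/2) Σₖ λₖ hₖ(0)²) Σₖ λₖ hₖ(0)² + (α/β) Σₖ cₖ(0)². -/
open Finset MeasureTheory intervalIntegral

/-- First-order a priori estimate (F1) for the Galerkin approximations of the
coupled non-degenerate Kirchhoff–heat system. -/
theorem galerkin_first_order_estimate
    (n : ℕ) (lam : Fin n → ℝ) (hlam : ∀ k, 0 < lam k)
    (m₀ m₁ α β : ℝ) (hm₀ : 0 < m₀) (hm₁ : 0 < m₁) (hα : α ≠ 0) (hβ : β ≠ 0)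
    (hsign : 0 < α / β)
    (h c : Fin n → ℝ → ℝ)
    (hdiff : ∀ k, Differentiable ℝ (h k))
    (hdiff' : ∀ k, Differentiable ℝ (deriv (h k)))
    (cdiff : ∀ k, Differentiable ℝ (c k))
    (heq : ∀ k, ∀ t, 0 ≤ t →
      deriv (deriv (h k)) t
        + (m₀ + m₁ * ∑ j, lam j * (h j t) ^ 2) * lam k * h k t
        = α * lam k * c k t)
    (ceq : ∀ k, ∀ t, 0 ≤ t →
      deriv (c k) t + lam k * c k t + β * lam k * deriv (h k) t = 0) :
    ∀ t, 0 ≤ t →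
      (∑ k, (deriv (h k) t) ^ 2)
        + (m₀ + (m₁ / 2) * ∑ k, lam k * (h k t) ^ 2) * (∑ k, lam k * (h k t) ^ 2)
        + (α / β) * ∑ k, (c k t) ^ 2
        + (2 * α / β) * ∫ s in (0:ℝ)..t, ∑ k, lam k * (c k s) ^ 2
      ≤ (∑ k, (deriv (h k) 0) ^ 2)
        + (m₀ + (m₁ / 2) * ∑ k, lam k * (h k 0) ^ 2) * (∑ k, lam k * (h k 0) ^ 2)
        + (α / β) * ∑ k, (c k 0) ^ 2 := by
  have hS : ∀ t, HasDerivAt (fun t => ∑ k, lam k * (h k t) ^ 2)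
      (∑ k, 2 * (lam k * h k t * deriv (h k) t)) t := by
    intro t
    refine HasDerivAt.fun_sum fun k _ => ?_
    refine ((((hdiff k t).hasDerivAt).pow 2).const_mul (lam k)).congr_deriv ?_
    norm_num
    ring
  have hK : ∀ t, HasDerivAt (fun t => ∑ k, (deriv (h k) t) ^ 2)
      (∑ k, 2 * (deriv (h k) t * deriv (deriv (h k)) t)) t := by
    intro t
    refine HasDerivAt.fun_sum fun k _ => ?_
    refine (((hdiff' k t).hasDerivAt).pow 2).congr_deriv ?_
    norm_num
    ring
  have hC : ∀ t, HasDerivAt (fun t => ∑ k, (c k t) ^ 2)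
      (∑ k, 2 * (c k t * deriv (c k) t)) t := by
    intro t
    refine HasDerivAt.fun_sum fun k _ => ?_
    refine (((cdiff k t).hasDerivAt).pow 2).congr_deriv ?_
    norm_num
    ring
  have hcont : Continuous (fun s => ∑ k, lam k * (c k s) ^ 2) := by
    refine continuous_finset_sum _ fun k _ => ?_
    exact continuous_const.mul ((cdiff k).continuous.pow 2)
  have hI : ∀ t, HasDerivAt (fun t => ∫ s in (0:ℝ)..t, ∑ k, lam k * (c k s) ^ 2)
      (∑ k, lam k * (c k t) ^ 2) t := fun t =>
    hcont.integral_hasStrictDerivAt 0 t |>.hasDerivAt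
  have hF : ∀ t, HasDerivAt (fun t => (∑ k, (deriv (h k) t) ^ 2)
        + (m₀ + (m₁ / 2) * ∑ k, lam k * (h k t) ^ 2) * (∑ k, lam k * (h k t) ^ 2)
        + (α / β) * ∑ k, (c k t) ^ 2
        + (2 * α / β) * ∫ s in (0:ℝ)..t, ∑ k, lam k * (c k s) ^ 2) _ t := fun t =>
    (((hK t).add ((((hS t).const_mul (m₁ / 2)).const_add m₀).mul (hS t))).add
      ((hC t).const_mul (α / β))).add ((hI t).const_mul (2 * α / β))
  have anti := antitoneOn_of_deriv_nonpos (convex_Ici (0:ℝ))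
    (fun t _ => (hF t).continuousAt.continuousWithinAt)
    (fun t _ => (hF t).differentiableAt.differentiableWithinAt)
    (by
      intro t ht
      rw [interior_Ici] at ht
      have ht0 : 0 ≤ t := le_of_lt ht
      rw [(hF t).deriv]
      apply le_of_eq
      have e1 : ∑ k, 2 * (deriv (h k) t * deriv (deriv (h k)) t)
          = 2 * α * ∑ k, lam k * c k t * deriv (h k) t
            - (m₀ + m₁ * ∑ j, lam j * (h j t) ^ 2)
              * ∑ k, 2 * (lam k * h k t * deriv (h k) t) := by
        rw [Finset.mul_sum, Finset.mul_sum, ← Finset.sum_sub_distrib]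
        refine Finset.sum_congr rfl fun k _ => ?_
        linear_combination (2 * deriv (h k) t) * heq k t ht0
      have e2 : ∑ k, 2 * (c k t * deriv (c k) t)
          = - 2 * ∑ k, lam k * (c k t) ^ 2
            - 2 * β * ∑ k, lam k * c k t * deriv (h k) t := by
        rw [Finset.mul_sum, Finset.mul_sum, ← Finset.sum_sub_distrib]
        refine Finset.sum_congr rfl fun k _ => ?_
        linear_combination (2 * c k t) * ceq k t ht0
      rw [e1, e2]
      field_simp
      ring)
  intro t ht
  have key := anti (Set.mem_Ici.2 le_rfl) (Set.mem_Ici.2 ht) ht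
  simpa using key
end

section
/- Consider the Galerkin system: let n ∈ ℕ, let λ₁, …, λₙ be positive reals, let m₀, m₁ > 0, and let α, β be nonzero reals. Let h : [0, ∞) → ℝⁿ be twice differentiable and c : [0, ∞) → ℝⁿ be differentiable, satisfying for each k and all t ≥ 0: hₖ''(t) + (m₀ + m₁ Σⱼ λⱼ hⱼ(t)²) λₖ hₖ(t) = α λₖ cₖ(t) and cₖ'(t) + λₖ cₖ(t) + β λₖ hₖ'(t) = 0. Define the higher-order energy E*ⁿ(t) = Σₖ λₖ hₖ'(t)² + (m₀ + m₁ Σₖ λₖ hₖ(t)²) Σₖ λₖ² hₖ(t)² + (α/β) Σₖ λₖ cₖ(t)². Then for all t ≥ 0: (E*ⁿ)'(t) + (2α/β) Σₖ λₖ² cₖ(t)² = 2 m₁ (Σₖ λₖ hₖ(t) hₖ'(t)) (Σₖ λₖ² hₖ(t)²). -/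
open Finset

theorem hasDerivAt_weighted_sq {n : ℕ} (w : Fin n → ℝ) (f : Fin n → ℝ → ℝ)
    (hf : ∀ k, Differentiable ℝ (f k)) (t : ℝ) :
    HasDerivAt (fun t => ∑ k, w k * (f k t) ^ 2)
      (2 * ∑ k, w k * f k t * deriv (f k) t) t := by
  have key : ∀ k ∈ (Finset.univ : Finset (Fin n)),
      HasDerivAt (fun t => w k * (f k t) ^ 2) (2 * (w k * f k t * deriv (f k) t)) t := by
    intro k _
    have h1 := (((hf k) t).hasDerivAt.fun_pow 2).const_mul (w k)
    refine h1.congr_deriv ?_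
    push_cast
    ring
  rw [Finset.mul_sum]
  exact HasDerivAt.fun_sum key

/-- Higher-order energy identity (Step 3 of the well-posedness proof) for the
Galerkin approximations of the coupled non-degenerate Kirchhoff–heat system. -/
theorem galerkin_higher_order_identity
    (n : ℕ) (lam : Fin n → ℝ) (hlam : ∀ k, 0 < lam k)
    (m₀ m₁ α β : ℝ) (hm₀ : 0 < m₀) (hm₁ : 0 < m₁) (hα : α ≠ 0) (hβ : β ≠ 0)
    (h c : Fin n → ℝ → ℝ)
    (hdiff : ∀ k, Differentiable ℝ (h k))
    (hdiff' : ∀ k, Differentiable ℝ (deriv (h k)))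
    (cdiff : ∀ k, Differentiable ℝ (c k))
    (heq : ∀ k, ∀ t, 0 ≤ t →
      deriv (deriv (h k)) t
        + (m₀ + m₁ * ∑ j, lam j * (h j t) ^ 2) * lam k * h k t
        = α * lam k * c k t)
    (ceq : ∀ k, ∀ t, 0 ≤ t →
      deriv (c k) t + lam k * c k t + β * lam k * deriv (h k) t = 0)
    (Estar : ℝ → ℝ)
    (hEstar : Estar = fun t =>
      (∑ k, lam k * (deriv (h k) t) ^ 2)
        + (m₀ + m₁ * ∑ k, lam k * (h k t) ^ 2) * ∑ k, (lam k) ^ 2 * (h k t) ^ 2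
        + (α / β) * ∑ k, lam k * (c k t) ^ 2) :
    ∀ t, 0 ≤ t →
      HasDerivAt Estar
        (2 * m₁ * (∑ k, lam k * h k t * deriv (h k) t)
            * (∑ k, (lam k) ^ 2 * (h k t) ^ 2)
          - (2 * α / β) * ∑ k, (lam k) ^ 2 * (c k t) ^ 2) t := by
  intro t ht
  subst hEstar
  have d1 := hasDerivAt_weighted_sq lam (fun k => deriv (h k)) hdiff' t
  have d2 := hasDerivAt_weighted_sq lam h hdiff t
  have d3 := hasDerivAt_weighted_sq (fun k => lam k ^ 2) h hdiff t
  have d4 := hasDerivAt_weighted_sq lam c cdiff t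
  have d := (d1.fun_add (((d2.const_mul m₁).const_add m₀).fun_mul d3)).fun_add
    (d4.const_mul (α / β))
  refine d.congr_deriv ?_
  have e1 : ∑ k, lam k * deriv (h k) t * deriv (deriv (h k)) t
      = α * ∑ k, lam k ^ 2 * c k t * deriv (h k) t
        - (m₀ + m₁ * ∑ j, lam j * (h j t) ^ 2)
          * ∑ k, lam k ^ 2 * h k t * deriv (h k) t := by
    rw [Finset.mul_sum, Finset.mul_sum (s := Finset.univ)
      (f := fun k => lam k ^ 2 * h k t * deriv (h k) t), ← Finset.sum_sub_distrib]
    refine Finset.sum_congr rfl fun k _ => ?_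
    linear_combination (lam k * deriv (h k) t) * heq k t ht
  have e2 : ∑ k, lam k * c k t * deriv (c k) t
      = - ∑ k, lam k ^ 2 * (c k t) ^ 2
        - β * ∑ k, lam k ^ 2 * c k t * deriv (h k) t := by
    rw [Finset.mul_sum, ← Finset.sum_neg_distrib, ← Finset.sum_sub_distrib]
    refine Finset.sum_congr rfl fun k _ => ?_
    linear_combination (lam k * c k t) * ceq k t ht
  simp only [e1, e2]
  field_simp
  ring
end
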